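/- Assume -1 < θ < 0, and b ≥ 0, c ≥ 0 on Ω. Let h be a boundary datum and let Ψ ∈ C²(Ω) ∩ C¹(cl(Ω)) with Ψ > 0 be a classical solution of ∇·(a∇Ψ) = bΨ + cΨ^{-θ} in Ω with Ψ = h on ∂Ω. Let Ψ₀ ∈ C²(Ω) ∩ C¹(cl(Ω)) with Ψ₀ > 0 satisfy -∇·(a∇Ψ₀) + bΨ₀ = 0 in Ω with Ψ₀ = h on ∂Ω, and for each n ≥ 1 let Ψ_n ∈ C²(Ω) ∩ C¹(cl(Ω)) with Ψ_n > 0 satisfy -∇·(a∇Ψ_n) + bΨ_n + cΨ_{n-1}^{-(1+θ)}Ψ_n = 0 in Ω with Ψ_n = h on ∂Ω. Then for every n ≥ 0 one has Ψ ≤ Ψ_{n+1} ≤ Ψ_n in Ω; consequently, for every x ∈ Ω the sequence (Ψ_n(x)) is nonincreasing, bounded below by Ψ(x), and convergent. -/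

import Mathlib

open Real Set MeasureTheory Filter Topology

/-- Divergence-form operator `∇·(a∇u)(x) = ∑ i ∂_i (a ∂_i u)(x)`. -/
noncomputable def divA {d : ℕ} (a u : EuclideanSpace ℝ (Fin d) → ℝ)
    (x : EuclideanSpace ℝ (Fin d)) : ℝ :=
  ∑ i : Fin d,
    fderiv ℝ (fun y => a y * fderiv ℝ u y (EuclideanSpace.single i (1 : ℝ))) x
      (EuclideanSpace.single i (1 : ℝ))

/-- Squared Euclidean norm of the gradient `|∇u|²(x)`. -/
noncomputable def gradSq {d : ℕ} (u : EuclideanSpace ℝ (Fin d) → ℝ)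
    (x : EuclideanSpace ℝ (Fin d)) : ℝ :=
  ∑ i : Fin d, (fderiv ℝ u x (EuclideanSpace.single i (1 : ℝ))) ^ 2

/-!
Both orderings compare two positive functions that satisfy `∇·(a∇u) = κ u` with the same boundary
data, and the one with the larger coefficient `κ ≥ 0` is the smaller: where `w = u₁ - u₂` is
positive, `∇·(a∇w) = (κ₁ - κ₂) u₁ + κ₂ w ≥ 0`, so `w ≤ 0` by the weak maximum principle. The
latter holds because adding a small multiple of the barrier `exp ⟪v, ·⟫`, a strict subsolution once
`‖v‖` exceeds `‖∇a‖ / a`, would turn a positive value of `w` into an interior maximum of a function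
with `∇·(a∇·) > 0`.

Here `κ = b + c s ^ (-(1 + θ))` decreases in `s > 0` and is at least `b`, so an ordering of the
functions inserted for `s` is passed on to the solutions, and both chains of inequalities follow by
induction. Bounded monotone sequences converge.
-/

section DirichletComparison

open InnerProductSpace
open scoped Laplacian Gradient RealInnerProductSpace

section SecondDerivative

variable {E : Type*} [NormedAddCommGroup E]

lemma deriv_deriv_nonpos_of_isLocalMax {f : ℝ → ℝ} {t : ℝ} (hf : ContinuousAt f t)
    (hmax : IsLocalMax f t) : deriv (deriv f) t ≤ 0 := by
  by_contra! hpos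
  have hmin : IsLocalMin f t := isLocalMin_of_deriv_deriv_pos hpos hmax.deriv_eq_zero hf
  have hconst : f =ᶠ[𝓝 t] fun _ => f t := by
    filter_upwards [hmax, hmin] with s hle hge using le_antisymm hle hge
  have hzero : deriv (deriv f) t = 0 := by
    rw [hconst.deriv.deriv_eq]
    simp only [deriv_const', deriv_const]
  exact hpos.ne' hzero

lemma deriv_deriv_comp_add_smul {F : Type*} [NormedSpace ℝ E] [NormedAddCommGroup F]
    [NormedSpace ℝ F] {f : E → F} {x : E} (hf : ContDiffAt ℝ 2 f x) (v : E) :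
    deriv (deriv fun t : ℝ => f (x + t • v)) 0 = iteratedFDeriv ℝ 2 f x ![v, v] := by
  have hline (t : ℝ) : HasDerivAt (fun t : ℝ => x + t • v) v t := by
    simpa using ((hasDerivAt_id t).smul_const v).const_add x
  have hx : x + (0 : ℝ) • v = x := by simp only [zero_smul, add_zero]
  have htend : Tendsto (fun t : ℝ => x + t • v) (𝓝 0) (𝓝 x) := by
    simpa only [hx] using (hline 0).continuousAt.tendsto
  have hfirst : deriv (fun t : ℝ => f (x + t • v)) =ᶠ[𝓝 0] fun t => fderiv ℝ f (x + t • v) v := by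
    filter_upwards [htend.eventually (hf.eventually (by simp))] with t ht
    exact ((ht.differentiableAt (by simp)).hasFDerivAt.comp_hasDerivAt t (hline t)).deriv
  have hfderiv : HasFDerivAt (fderiv ℝ f) (fderiv ℝ (fderiv ℝ f) x) (x + (0 : ℝ) • v) := by
    rw [hx]
    exact ((hf.fderiv_right (m := 1) (by norm_num)).differentiableAt (by simp)).hasFDerivAt
  have hcurve : HasDerivAt (fun t : ℝ => fderiv ℝ f (x + t • v)) (fderiv ℝ (fderiv ℝ f) x v) 0 :=
    hfderiv.comp_hasDerivAt (f := fun t : ℝ => x + t • v) (0 : ℝ) (hline 0)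
  have hsecond : HasDerivAt (fun t : ℝ => fderiv ℝ f (x + t • v) v)
      (fderiv ℝ (fderiv ℝ f) x v v) 0 := by
    simpa only [map_zero, add_zero] using hcurve.clm_apply (hasDerivAt_const 0 v)
  rw [hfirst.deriv_eq, hsecond.deriv, iteratedFDeriv_two_apply]
  rfl

variable [InnerProductSpace ℝ E]

lemma contDiff_exp_inner {n : WithTop ℕ∞} (v : E) : ContDiff ℝ n fun y => exp ⟪v, y⟫_ℝ :=
  (contDiff_const.inner ℝ contDiff_id).exp

lemma gradient_exp_inner [CompleteSpace E] (v x : E) :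
    ∇ (fun y => exp ⟪v, y⟫_ℝ) x = exp ⟪v, x⟫_ℝ • v := by
  refine HasGradientAt.gradient (hasGradientAt_iff_hasFDerivAt.2 ?_)
  simpa only [map_smul, toDual_apply_apply] using ((toDual ℝ E v).hasFDerivAt (x := x)).exp

variable [FiniteDimensional ℝ E]

lemma laplacian_nonpos_of_isLocalMax {u : E → ℝ} {x : E} (hu : ContDiffAt ℝ 2 u x)
    (hmax : IsLocalMax u x) : Δ u x ≤ 0 := by
  rw [laplacian_eq_iteratedFDeriv_stdOrthonormalBasis]
  refine Finset.sum_nonpos fun i _ => ?_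
  set e := stdOrthonormalBasis ℝ E i
  have hline : ContinuousAt (fun t : ℝ => x + t • e) 0 := by fun_prop
  have hx : x + (0 : ℝ) • e = x := by simp only [zero_smul, add_zero]
  rw [← deriv_deriv_comp_add_smul hu e]
  refine deriv_deriv_nonpos_of_isLocalMax ?_ ?_
  · exact hu.continuousAt.comp_of_eq hline hx
  · have hmax₀ : IsLocalMax u (x + (0 : ℝ) • e) := by rwa [hx]
    exact hmax₀.comp_continuous (g := fun t : ℝ => x + t • e) hline

lemma laplacian_exp_inner (v x : E) :
    Δ (fun y => exp ⟪v, y⟫_ℝ) x = exp ⟪v, x⟫_ℝ * ‖v‖ ^ 2 := by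
  have hderiv (p q : ℝ) : deriv (deriv fun t : ℝ => exp (p + t * q)) 0 = exp p * q ^ 2 := by
    have hfirst (t : ℝ) : HasDerivAt (fun t : ℝ => exp (p + t * q)) (exp (p + t * q) * q) t := by
      simpa using (((hasDerivAt_id t).mul_const q).const_add p).exp
    rw [funext fun t => (hfirst t).deriv, ((hfirst 0).mul_const q).deriv]
    ring_nf
  rw [laplacian_eq_iteratedFDeriv_stdOrthonormalBasis,
    ← (stdOrthonormalBasis ℝ E).sum_sq_inner_left v, Finset.mul_sum]
  refine Finset.sum_congr rfl fun i _ => ?_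
  rw [← deriv_deriv_comp_add_smul (contDiff_exp_inner v).contDiffAt, ← hderiv]
  simp only [inner_add_right, inner_smul_right]

end SecondDerivative

section DivergenceForm

variable {d : ℕ} {a u v : EuclideanSpace ℝ (Fin d) → ℝ} {x : EuclideanSpace ℝ (Fin d)}

lemma divA_eq_laplacian_add_inner_gradient (ha : DifferentiableAt ℝ a x)
    (hu : ContDiffAt ℝ 2 u x) : divA a u x = a x * Δ u x + ⟪∇ a x, ∇ u x⟫_ℝ := by
  have hfderiv : DifferentiableAt ℝ (fderiv ℝ u) x :=
    (hu.fderiv_right (m := 1) (by norm_num)).differentiableAt (by simp)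
  rw [laplacian_eq_iteratedFDeriv_orthonormalBasis u (EuclideanSpace.basisFun (Fin d) ℝ),
    ← (EuclideanSpace.basisFun (Fin d) ℝ).sum_inner_mul_inner, Finset.mul_sum,
    ← Finset.sum_add_distrib]
  refine Finset.sum_congr rfl fun i _ => ?_
  rw [fderiv_fun_mul ha (hfderiv.clm_apply (differentiableAt_const _)),
    fderiv_clm_apply hfderiv (differentiableAt_const _)]
  simp [iteratedFDeriv_two_apply, mul_comm]

lemma divA_add (ha : DifferentiableAt ℝ a x) (hu : ContDiffAt ℝ 2 u x)
    (hv : ContDiffAt ℝ 2 v x) : divA a (u + v) x = divA a u x + divA a v x := by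
  have hgrad : ∇ (u + v) x = ∇ u x + ∇ v x := by
    simp only [gradient, map_add,
      fderiv_add (hu.differentiableAt (by simp)) (hv.differentiableAt (by simp))]
  have huv : ContDiffAt ℝ 2 (u + v) x := hu.add hv
  rw [divA_eq_laplacian_add_inner_gradient ha huv,
    divA_eq_laplacian_add_inner_gradient ha hu, divA_eq_laplacian_add_inner_gradient ha hv,
    hu.laplacian_add hv, hgrad, inner_add_right]
  ring

lemma divA_smul (ha : DifferentiableAt ℝ a x) (hu : ContDiffAt ℝ 2 u x) (k : ℝ) :
    divA a (k • u) x = k * divA a u x := by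
  have hgrad : ∇ (k • u) x = k • ∇ u x := by
    simp only [gradient, map_smul, fderiv_const_smul (hu.differentiableAt (by simp))]
  have hku : ContDiffAt ℝ 2 (k • u) x := hu.const_smul k
  rw [divA_eq_laplacian_add_inner_gradient ha hku,
    divA_eq_laplacian_add_inner_gradient ha hu, laplacian_smul k hu, hgrad,
    real_inner_smul_right, smul_eq_mul]
  ring

lemma divA_sub (ha : DifferentiableAt ℝ a x) (hu : ContDiffAt ℝ 2 u x)
    (hv : ContDiffAt ℝ 2 v x) : divA a (u - v) x = divA a u x - divA a v x := by
  have hnegv : ContDiffAt ℝ 2 ((-1 : ℝ) • v) x := hv.const_smul (-1 : ℝ)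
  rw [sub_eq_add_neg, ← neg_one_smul ℝ v, divA_add ha hu hnegv, divA_smul ha hv, neg_one_mul,
    ← sub_eq_add_neg]

lemma divA_nonpos_of_isLocalMax (ha : DifferentiableAt ℝ a x) (ha0 : 0 ≤ a x)
    (hu : ContDiffAt ℝ 2 u x) (hmax : IsLocalMax u x) : divA a u x ≤ 0 := by
  have hgrad : ∇ u x = 0 := by rw [gradient, hmax.fderiv_eq_zero, map_zero]
  rw [divA_eq_laplacian_add_inner_gradient ha hu, hgrad, inner_zero_right, add_zero]
  exact mul_nonpos_of_nonneg_of_nonpos ha0 (laplacian_nonpos_of_isLocalMax hu hmax)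

lemma divA_exp_inner (ha : DifferentiableAt ℝ a x) (v : EuclideanSpace ℝ (Fin d)) :
    divA a (fun y => exp ⟪v, y⟫_ℝ) x = exp ⟪v, x⟫_ℝ * (a x * ‖v‖ ^ 2 + ⟪∇ a x, v⟫_ℝ) := by
  rw [divA_eq_laplacian_add_inner_gradient ha (contDiff_exp_inner v).contDiffAt,
    laplacian_exp_inner, gradient_exp_inner, real_inner_smul_right]
  ring

end DivergenceForm

section MaximumPrinciple

variable {d : ℕ} {Ω : Set (EuclideanSpace ℝ (Fin d))} {a : EuclideanSpace ℝ (Fin d) → ℝ} {M : ℝ}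

lemma exists_contDiff_divA_pos (hd : 1 ≤ d) (hΩ : IsOpen Ω) (ha : DifferentiableOn ℝ a Ω)
    (hpos : ∀ x ∈ Ω, 0 < a x) (hM : ∀ x ∈ Ω, ‖∇ a x‖ ≤ M * a x) :
    ∃ φ : EuclideanSpace ℝ (Fin d) → ℝ, ContDiff ℝ 2 φ ∧ ∀ x ∈ Ω, 0 < divA a φ x := by
  have : NeZero d := ⟨Nat.one_le_iff_ne_zero.1 hd⟩
  obtain ⟨v, hv⟩ := exists_norm_eq (EuclideanSpace ℝ (Fin d)) (by positivity : 0 ≤ |M| + 1)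
  refine ⟨fun y => exp ⟪v, y⟫_ℝ, contDiff_exp_inner v, fun x hx => ?_⟩
  rw [divA_exp_inner (ha.differentiableAt (hΩ.mem_nhds hx))]
  refine mul_pos (exp_pos _) ?_
  have hv_pos : 0 < ‖v‖ := by rw [hv]; positivity
  have hv_gt : M < ‖v‖ := by linarith [le_abs_self M]
  calc 0 < a x * ‖v‖ * (‖v‖ - M) := mul_pos (mul_pos (hpos x hx) hv_pos) (sub_pos.2 hv_gt)
    _ = a x * ‖v‖ ^ 2 - M * a x * ‖v‖ := by ring
    _ ≤ a x * ‖v‖ ^ 2 - ‖∇ a x‖ * ‖v‖ := by gcongr; exact hM x hx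
    _ ≤ a x * ‖v‖ ^ 2 + ⟪∇ a x, v⟫_ℝ := by
      linarith [neg_le_of_abs_le (abs_real_inner_le_norm (∇ a x) v)]

lemma nonpos_of_divA_nonneg (hd : 1 ≤ d) (hΩ : IsOpen Ω) (hbdd : Bornology.IsBounded Ω)
    (ha : DifferentiableOn ℝ a Ω) (hpos : ∀ x ∈ Ω, 0 < a x) (hM : ∀ x ∈ Ω, ‖∇ a x‖ ≤ M * a x)
    {u : EuclideanSpace ℝ (Fin d) → ℝ} (hu : ContDiffOn ℝ 2 u Ω)
    (huc : ContinuousOn u (closure Ω)) (hbd : ∀ x ∈ frontier Ω, u x ≤ 0)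
    (hsub : ∀ x ∈ Ω, 0 < u x → 0 ≤ divA a u x) : ∀ x ∈ Ω, u x ≤ 0 := by
  intro x hx
  by_contra! hux
  obtain ⟨φ, hφ, hφ_pos⟩ := exists_contDiff_divA_pos hd hΩ ha hpos hM
  obtain ⟨B, hB⟩ := hbdd.isCompact_closure.exists_bound_of_continuousOn hφ.continuous.continuousOn
  obtain ⟨ε, hε, hεB⟩ := exists_pos_mul_lt hux (2 * B)
  obtain ⟨y, hy, hmax⟩ := hbdd.isCompact_closure.exists_isMaxOn ⟨x, subset_closure hx⟩
    (huc.add (hφ.continuous.continuousOn.const_smul ε))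
  -- `ε` is small against the oscillation of `φ`, so the maximum is attained where `u > 0`.
  have huy : 0 < u y := by
    have hle : u x + ε * φ x ≤ u y + ε * φ y := hmax (subset_closure hx)
    have hosc : φ y - φ x ≤ 2 * B := by
      linarith [le_of_abs_le (hB y hy), neg_le_of_abs_le (hB x (subset_closure hx))]
    linarith [mul_le_mul_of_nonneg_left hosc hε.le]
  have hyΩ : y ∈ Ω := by
    by_contra hy'
    exact huy.not_ge (hbd y (hΩ.frontier_eq ▸ ⟨hy, hy'⟩))
  have hΩy : Ω ∈ 𝓝 y := hΩ.mem_nhds hyΩ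
  have huy2 : ContDiffAt ℝ 2 u y := hu.contDiffAt hΩy
  have hφy2 : ContDiffAt ℝ 2 (ε • φ) y := hφ.contDiffAt.const_smul ε
  have hay : DifferentiableAt ℝ a y := ha.differentiableAt hΩy
  have hle : divA a (u + ε • φ) y ≤ 0 :=
    divA_nonpos_of_isLocalMax hay (hpos y hyΩ).le (huy2.add hφy2)
      (hmax.isLocalMax (mem_of_superset hΩy subset_closure))
  rw [divA_add hay huy2 hφy2, divA_smul hay hφ.contDiffAt] at hle
  linarith [hsub y hyΩ huy, mul_pos hε (hφ_pos y hyΩ)]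

/-- A classical solution of `∇·(a∇u) = κ u` in `Ω` with `u = h` on `∂Ω`. Only continuity is
required up to the boundary. -/
structure IsDirichletSolution (a κ h : EuclideanSpace ℝ (Fin d) → ℝ)
    (Ω : Set (EuclideanSpace ℝ (Fin d))) (u : EuclideanSpace ℝ (Fin d) → ℝ) : Prop where
  contDiffOn : ContDiffOn ℝ 2 u Ω
  continuousOn : ContinuousOn u (closure Ω)
  divA_eq : ∀ x ∈ Ω, divA a u x = κ x * u x
  eq_boundary : ∀ x ∈ frontier Ω, u x = h x

lemma IsDirichletSolution.le_of_coeff_le (hd : 1 ≤ d) (hΩ : IsOpen Ω)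
    (hbdd : Bornology.IsBounded Ω) (ha : DifferentiableOn ℝ a Ω) (hpos : ∀ x ∈ Ω, 0 < a x)
    (hM : ∀ x ∈ Ω, ‖∇ a x‖ ≤ M * a x) {κ₁ κ₂ h u₁ u₂ : EuclideanSpace ℝ (Fin d) → ℝ}
    (hu₁ : IsDirichletSolution a κ₁ h Ω u₁) (hu₂ : IsDirichletSolution a κ₂ h Ω u₂)
    (hu₁_nonneg : ∀ x ∈ Ω, 0 ≤ u₁ x) (hκ₂ : ∀ x ∈ Ω, 0 ≤ κ₂ x) (hκ : ∀ x ∈ Ω, κ₂ x ≤ κ₁ x) :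
    ∀ x ∈ Ω, u₁ x ≤ u₂ x := by
  intro x hx
  refine sub_nonpos.1 (nonpos_of_divA_nonneg hd hΩ hbdd ha hpos hM
    (hu₁.contDiffOn.sub hu₂.contDiffOn) (hu₁.continuousOn.sub hu₂.continuousOn)
    (fun y hy => ?_) (fun y hy hlt => ?_) x hx)
  · simp only [hu₁.eq_boundary y hy, hu₂.eq_boundary y hy, sub_self, le_refl]
  · have hΩy : Ω ∈ 𝓝 y := hΩ.mem_nhds hy
    calc 0 ≤ (κ₁ y - κ₂ y) * u₁ y + κ₂ y * (u₁ y - u₂ y) :=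
          add_nonneg (mul_nonneg (sub_nonneg.2 (hκ y hy)) (hu₁_nonneg y hy))
            (mul_nonneg (hκ₂ y hy) hlt.le)
      _ = divA a u₁ y - divA a u₂ y := by rw [hu₁.divA_eq y hy, hu₂.divA_eq y hy]; ring
      _ = divA a (u₁ - u₂) y := (divA_sub (ha.differentiableAt hΩy)
          (hu₁.contDiffOn.contDiffAt hΩy) (hu₂.contDiffOn.contDiffAt hΩy)).symm

end MaximumPrinciple

lemma exists_norm_gradient_le_mul {E : Type*} [NormedAddCommGroup E] [InnerProductSpace ℝ E]
    [CompleteSpace E] {K U : Set E} {a : E → ℝ} {a₀ : ℝ} (hK : IsCompact K) (hU : IsOpen U)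
    (hKU : K ⊆ U) (ha : ContDiffOn ℝ 1 a U) (ha₀ : 0 < a₀) :
    ∃ M, ∀ x ∈ K, a₀ ≤ a x → ‖∇ a x‖ ≤ M * a x := by
  have hgrad : ContinuousOn (fun x => ∇ a x) K := (toDual ℝ E).symm.continuous.comp_continuousOn
    ((ha.continuousOn_fderiv_of_isOpen hU le_rfl).mono hKU)
  obtain ⟨B, hB⟩ := hK.exists_bound_of_continuousOn hgrad
  refine ⟨B / a₀, fun x hx hle => (hB x hx).trans ?_⟩
  have hB_nonneg : 0 ≤ B := (norm_nonneg _).trans (hB x hx)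
  calc B = B / a₀ * a₀ := (div_mul_cancel₀ B ha₀.ne').symm
    _ ≤ B / a₀ * a x := by gcongr

lemma antitoneOn_const_add_mul_rpow {b c p : ℝ} (hc : 0 ≤ c) (hp : p ≤ 0) :
    AntitoneOn (fun s : ℝ => b + c * s ^ p) (Ioi 0) := fun _ hs _ ht hst =>
  add_le_add_right (mul_le_mul_of_nonneg_left
    (antitoneOn_rpow_Ioi_of_exponent_nonpos hp hs ht hst) hc) b

lemma rpow_neg_one_add_mul_self {s : ℝ} (hs : s ≠ 0) (θ : ℝ) :
    s ^ (-(1 + θ)) * s = s ^ (-θ) := by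
  rw [← rpow_add_one hs]
  ring_nf

theorem stmt15_general {d : ℕ} (hd : 1 ≤ d) {Ω : Set (EuclideanSpace ℝ (Fin d))}
    (hΩ : IsOpen Ω) (hbdd : Bornology.IsBounded Ω) {a : EuclideanSpace ℝ (Fin d) → ℝ}
    (ha : DifferentiableOn ℝ a Ω) (hpos : ∀ x ∈ Ω, 0 < a x)
    {M : ℝ} (hM : ∀ x ∈ Ω, ‖∇ a x‖ ≤ M * a x)
    {κ₀ h : EuclideanSpace ℝ (Fin d) → ℝ} {κ : EuclideanSpace ℝ (Fin d) → ℝ → ℝ}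
    (hκ₀ : ∀ x ∈ Ω, 0 ≤ κ₀ x) (hκ₀_le : ∀ x ∈ Ω, ∀ s > 0, κ₀ x ≤ κ x s)
    (hκ_anti : ∀ x ∈ Ω, AntitoneOn (κ x) (Ioi 0)) {Ψ : EuclideanSpace ℝ (Fin d) → ℝ}
    (hΨ : IsDirichletSolution a (fun x => κ x (Ψ x)) h Ω Ψ) (hΨ_pos : ∀ x ∈ Ω, 0 < Ψ x)
    {Ψseq : ℕ → EuclideanSpace ℝ (Fin d) → ℝ}
    (hseq_zero : IsDirichletSolution a κ₀ h Ω (Ψseq 0))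
    (hseq_succ : ∀ n, IsDirichletSolution a (fun x => κ x (Ψseq n x)) h Ω (Ψseq (n + 1)))
    (hseq_pos : ∀ n, ∀ x ∈ Ω, 0 < Ψseq n x) :
    (∀ n : ℕ, ∀ x ∈ Ω, Ψ x ≤ Ψseq (n + 1) x ∧ Ψseq (n + 1) x ≤ Ψseq n x) ∧
      ∀ x ∈ Ω, ∃ L : ℝ, Ψ x ≤ L ∧ Tendsto (fun n => Ψseq n x) atTop (𝓝 L) := by
  have hκ_nonneg (n : ℕ) : ∀ x ∈ Ω, 0 ≤ κ x (Ψseq n x) := fun x hx =>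
    (hκ₀ x hx).trans (hκ₀_le x hx _ (hseq_pos n x hx))
  have hlower (n : ℕ) : ∀ x ∈ Ω, Ψ x ≤ Ψseq n x := by
    have hΨ_nonneg : ∀ x ∈ Ω, 0 ≤ Ψ x := fun x hx => (hΨ_pos x hx).le
    induction n with
    | zero =>
      exact hΨ.le_of_coeff_le hd hΩ hbdd ha hpos hM hseq_zero hΨ_nonneg hκ₀
        fun x hx => hκ₀_le x hx _ (hΨ_pos x hx)
    | succ n ih =>
      exact hΨ.le_of_coeff_le hd hΩ hbdd ha hpos hM (hseq_succ n) hΨ_nonneg (hκ_nonneg n)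
        fun x hx => hκ_anti x hx (hΨ_pos x hx) (hseq_pos n x hx) (ih x hx)
  have hstep (n : ℕ) : ∀ x ∈ Ω, Ψseq (n + 1) x ≤ Ψseq n x := by
    have hseq_nonneg (n : ℕ) : ∀ x ∈ Ω, 0 ≤ Ψseq n x := fun x hx => (hseq_pos n x hx).le
    induction n with
    | zero =>
      exact (hseq_succ 0).le_of_coeff_le hd hΩ hbdd ha hpos hM hseq_zero (hseq_nonneg 1) hκ₀
        fun x hx => hκ₀_le x hx _ (hseq_pos 0 x hx)
    | succ n ih =>
      exact (hseq_succ (n + 1)).le_of_coeff_le hd hΩ hbdd ha hpos hM (hseq_succ n)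
        (hseq_nonneg (n + 2)) (hκ_nonneg n)
        fun x hx => hκ_anti x hx (hseq_pos (n + 1) x hx) (hseq_pos n x hx) (ih x hx)
  refine ⟨fun n x hx => ⟨hlower (n + 1) x hx, hstep n x hx⟩, fun x hx => ?_⟩
  exact ⟨⨅ n, Ψseq n x, le_ciInf fun n => hlower n x hx,
    tendsto_atTop_ciInf (antitone_nat_of_succ_le fun n => hstep n x hx)
      ⟨Ψ x, forall_mem_range.2 fun n => hlower n x hx⟩⟩

end DirichletComparison

theorem stmt15 {d : ℕ} (hd : 1 ≤ d) (Ω U : Set (EuclideanSpace ℝ (Fin d)))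
    (hΩo : IsOpen Ω) (hΩb : Bornology.IsBounded Ω)
    (hU : IsOpen U) (hUΩ : closure Ω ⊆ U)
    (a b c : EuclideanSpace ℝ (Fin d) → ℝ)
    (ha : ContDiffOn ℝ 1 a U) (a₀ : ℝ) (ha₀ : 0 < a₀) (halb : ∀ x ∈ Ω, a₀ ≤ a x)
    (hbcont : ContinuousOn b (closure Ω)) (hccont : ContinuousOn c (closure Ω))
    (θ : ℝ) (hθ₁ : -1 < θ) (hθ₂ : θ < 0)
    (hbnn : ∀ x ∈ Ω, 0 ≤ b x) (hcnn : ∀ x ∈ Ω, 0 ≤ c x)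
    (h : EuclideanSpace ℝ (Fin d) → ℝ)
    (Ψ : EuclideanSpace ℝ (Fin d) → ℝ)
    (hΨ2 : ContDiffOn ℝ 2 Ψ Ω) (hΨ1 : ContDiffOn ℝ 1 Ψ (closure Ω))
    (hΨpos : ∀ x ∈ closure Ω, 0 < Ψ x)
    (hΨeq : ∀ x ∈ Ω, divA a Ψ x = b x * Ψ x + c x * Ψ x ^ (-θ))
    (hΨbd : ∀ x ∈ frontier Ω, Ψ x = h x)
    (Ψseq : ℕ → EuclideanSpace ℝ (Fin d) → ℝ)
    (hseq2 : ∀ n, ContDiffOn ℝ 2 (Ψseq n) Ω)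
    (hseq1 : ∀ n, ContDiffOn ℝ 1 (Ψseq n) (closure Ω))
    (hseqpos : ∀ n, ∀ x ∈ closure Ω, 0 < Ψseq n x)
    (hseq0 : ∀ x ∈ Ω, -divA a (Ψseq 0) x + b x * Ψseq 0 x = 0)
    (hseqn : ∀ n : ℕ, ∀ x ∈ Ω,
      -divA a (Ψseq (n + 1)) x + b x * Ψseq (n + 1) x
        + c x * (Ψseq n x) ^ (-(1 + θ)) * Ψseq (n + 1) x = 0)
    (hseqbd : ∀ n, ∀ x ∈ frontier Ω, Ψseq n x = h x) :
    (∀ n : ℕ, ∀ x ∈ Ω, Ψ x ≤ Ψseq (n + 1) x ∧ Ψseq (n + 1) x ≤ Ψseq n x) ∧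
      ∀ x ∈ Ω, ∃ L : ℝ, Ψ x ≤ L ∧
        Filter.Tendsto (fun n => Ψseq n x) Filter.atTop (nhds L) := by
  have hcl : Ω ⊆ closure Ω := subset_closure
  obtain ⟨M, hM⟩ := exists_norm_gradient_le_mul hΩb.isCompact_closure hU hUΩ ha ha₀
  exact stmt15_general hd hΩo hΩb ((ha.mono (hcl.trans hUΩ)).differentiableOn (by simp))
    (fun x hx => ha₀.trans_le (halb x hx)) (fun x hx => hM x (hcl hx) (halb x hx)) hbnn
    (κ := fun x s => b x + c x * s ^ (-(1 + θ)))
    (fun x hx s hs => le_add_of_nonneg_right (mul_nonneg (hcnn x hx) (rpow_nonneg hs.le _)))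
    (fun x hx => antitoneOn_const_add_mul_rpow (hcnn x hx) (by linarith))
    ⟨hΨ2, hΨ1.continuousOn, fun x hx => by
      rw [hΨeq x hx, add_mul, mul_assoc, rpow_neg_one_add_mul_self (hΨpos x (hcl hx)).ne'], hΨbd⟩
    (fun x hx => hΨpos x (hcl hx))
    ⟨hseq2 0, (hseq1 0).continuousOn, fun x hx => by linarith [hseq0 x hx], hseqbd 0⟩
    (fun n => ⟨hseq2 _, (hseq1 _).continuousOn, fun x hx => by linarith [hseqn n x hx], hseqbd _⟩)
    (fun n x hx => hseqpos n x (hcl hx))
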